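/- If f: N → R≥0 is a non-negative multiplicative function whose Dirichlet series Σ f(n) n^{-s} equals ζ(s)^κ G(s) with κ = k(k+1)/2 > 0 and G a Dirichlet series absolutely convergent in Re(s) > 1 - δ for some δ > 0, with G(1) > 0, then Σ_{m ≤ z, m odd} (d_k(m²)/m) Π_{p | 2m} p/(p+1) ∼ C(k) (log z)^{k(k+1)/2} for a positive constant C(k), where d_k is the k-fold divisor function. -/

import Mathlib

open Filter

/-- `d_k(n)`: the number of ways to write `n` as an ordered product of `k` positive
integers. -/
noncomputable def dfold (k n : ℕ) : ℕ :=
  ((Fintype.piFinset fun _ : Fin k => Finset.Icc 1 n).filter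
    fun v => ∏ i, v i = n).card

/-!
Write `κ = k(k+1)/2` and let `g` be the summand with the constant factor `2/3` coming from `p = 2`
removed. It is multiplicative, and `g p = d_k(p²)/p + O(p⁻²) = κ/p + O(p⁻²)`, so `g` resembles the
`κ`-fold Dirichlet convolution power of `n ↦ 1/n`. As `n ↦ μ(n)/n` inverts the latter, convolving
`g` with the `κ`-th power of `μ(n)/n` gives a multiplicative `h` with `h p = O(p⁻²)` and
`g = h * (1/n)^κ`; its series converges absolutely by comparison with an Euler product.

Because the exponent is a natural number no contour integral is needed: induction on `κ` gives
`∑_{n ≤ x} (1/n)^κ ∼ (log x)^κ / κ!`, and dominated convergence transfers this to `g` with constant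
`(∑ h n) / κ!`. This constant is positive because no Euler factor of `∑ h n` vanishes: multiplied by
the corresponding factor of `(1/n)^κ` it gives `∑ g(p^j) ≥ g 1 = 1`.
-/

section

open Finset ArithmeticFunction
open scoped ArithmeticFunction.zeta ArithmeticFunction.Moebius Topology

section PrimePowers

theorem mul_apply_prime_pow {R : Type*} [Semiring R] (a b : ArithmeticFunction R) {p : ℕ}
    (hp : p.Prime) (j : ℕ) :
    (a * b) (p ^ j) = ∑ x ∈ antidiagonal j, a (p ^ x.1) * b (p ^ x.2) := by
  rw [mul_apply, Nat.sum_divisorsAntidiagonal (fun x y => a x * b y),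
    Nat.sum_divisors_prime_pow hp,
    Nat.sum_antidiagonal_eq_sum_range_succ (fun x y => a (p ^ x) * b (p ^ y))]
  refine sum_congr rfl fun i hi => ?_
  rw [Nat.pow_div (mem_range_succ_iff.1 hi) hp.pos]

theorem mul_apply_prime {R : Type*} [Semiring R] (a b : ArithmeticFunction R) {p : ℕ}
    (hp : p.Prime) : (a * b) p = a 1 * b p + a p * b 1 := by
  simpa [Nat.antidiagonal_succ] using mul_apply_prime_pow a b hp 1

theorem pow_apply_prime {R : Type*} [CommSemiring R] {a : ArithmeticFunction R}
    (ha : a.IsMultiplicative) (k : ℕ) {p : ℕ} (hp : p.Prime) : (a ^ k) p = k * a p := by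
  induction k with
  | zero => simp [one_apply_ne hp.ne_one]
  | succ k ih =>
    rw [pow_succ, mul_apply_prime _ _ hp, ih, ha.pow.map_one, ha.map_one]
    push_cast
    ring

theorem abs_mul_apply_prime_pow_le {a b : ArithmeticFunction ℝ} {p : ℕ} (hp : p.Prime)
    {A B x : ℝ} {r s : ℕ} (hx : 0 ≤ x) (ha : ∀ j : ℕ, |a (p ^ j)| ≤ A * (j + 1) ^ r * x ^ j)
    (hb : ∀ j : ℕ, |b (p ^ j)| ≤ B * (j + 1) ^ s * x ^ j) (j : ℕ) :
    |(a * b) (p ^ j)| ≤ A * B * (j + 1) ^ (r + s + 1) * x ^ j := by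
  have hA : 0 ≤ A := (abs_nonneg _).trans (by simpa using ha 0)
  have hB : 0 ≤ B := (abs_nonneg _).trans (by simpa using hb 0)
  have hterm : ∀ i ∈ antidiagonal j,
      |a (p ^ i.1) * b (p ^ i.2)| ≤ A * B * (j + 1) ^ (r + s) * x ^ j := by
    rintro ⟨i, l⟩ hil
    obtain rfl : i + l = j := mem_antidiagonal.1 hil
    calc |a (p ^ i) * b (p ^ l)|
        ≤ A * (i + 1) ^ r * x ^ i * (B * (l + 1) ^ s * x ^ l) := by
          rw [abs_mul]
          exact mul_le_mul (ha i) (hb l) (abs_nonneg _) ((abs_nonneg _).trans (ha i))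
      _ = A * B * ((i + 1) ^ r * (l + 1) ^ s) * x ^ (i + l) := by ring
      _ ≤ A * B * ((i + l + 1) ^ r * (i + l + 1) ^ s) * x ^ (i + l) := by
          gcongr <;> linarith [i.cast_nonneg (α := ℝ), l.cast_nonneg (α := ℝ)]
      _ = A * B * ((i + l : ℕ) + 1) ^ (r + s) * x ^ (i + l) := by push_cast; ring
  calc |(a * b) (p ^ j)|
      ≤ ∑ i ∈ antidiagonal j, |a (p ^ i.1) * b (p ^ i.2)| := by
        rw [mul_apply_prime_pow _ _ hp]
        exact abs_sum_le_sum_abs _ _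
    _ ≤ #(antidiagonal j) • (A * B * (j + 1) ^ (r + s) * x ^ j) := sum_le_card_nsmul _ _ _ hterm
    _ = A * B * (j + 1) ^ (r + s + 1) * x ^ j := by
        rw [Nat.card_antidiagonal, nsmul_eq_mul]
        push_cast
        ring

theorem abs_pow_apply_prime_pow_le {a : ArithmeticFunction ℝ} {p : ℕ} (hp : p.Prime) {x : ℝ}
    (hx : 0 ≤ x) (ha : ∀ j : ℕ, |a (p ^ j)| ≤ x ^ j) (k j : ℕ) :
    |(a ^ k) (p ^ j)| ≤ (j + 1) ^ k * x ^ j := by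
  induction k generalizing j with
  | zero => rcases eq_or_ne j 0 with rfl | hj <;> simp [*, one_apply, hp.ne_one]
  | succ k ih =>
    simpa [pow_succ] using abs_mul_apply_prime_pow_le hp hx (A := 1) (B := 1) (r := k) (s := 0)
      (by simpa using ih) (by simpa using ha) j

end PrimePowers

section DivisorFunction

theorem dfold_eq_card_finMulAntidiag (k n : ℕ) : dfold k n = #(Nat.finMulAntidiag k n) := by
  unfold dfold
  congr 1
  ext v
  simp only [mem_filter, Fintype.mem_piFinset, mem_Icc]
  constructor
  · rintro ⟨hv, rfl⟩
    exact Nat.mem_finMulAntidiag.2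
      ⟨rfl, prod_ne_zero_iff.2 fun i _ => Nat.one_le_iff_ne_zero.1 (hv i).1⟩
  · intro hv
    obtain ⟨hprod, hn⟩ := Nat.mem_finMulAntidiag.1 hv
    exact ⟨fun i => ⟨Nat.pos_of_ne_zero (Nat.ne_zero_of_mem_finMulAntidiag hv i),
      Nat.le_of_dvd hn.pos (Nat.dvd_of_mem_finMulAntidiag hv i)⟩, hprod⟩

theorem card_finMulAntidiag_succ (k n : ℕ) :
    #(Nat.finMulAntidiag (k + 1) n) = ∑ d ∈ n.divisors, #(Nat.finMulAntidiag k d) := by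
  rw [← card_sigma]
  refine card_nbij' (fun v => ⟨∏ i, Fin.tail v i, Fin.tail v⟩)
    (fun x => Fin.cons (n / x.1) x.2) ?_ ?_ ?_ ?_
  · intro v hv
    obtain ⟨rfl, hn⟩ := Nat.mem_finMulAntidiag.1 hv
    rw [Fin.prod_univ_succ] at hn ⊢
    simp [Fin.tail, right_ne_zero_of_mul hn, hn]
  · rintro ⟨d, w⟩ hw
    simp only [coe_sigma, Set.mem_sigma_iff, mem_coe, Nat.mem_divisors,
      Nat.mem_finMulAntidiag] at hw
    simp [Fin.prod_univ_succ, hw, Nat.div_mul_cancel]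
  · intro v hv
    obtain ⟨rfl, hn⟩ := Nat.mem_finMulAntidiag.1 hv
    rw [Fin.prod_univ_succ] at hn
    have hdiv : (∏ i, v i) / ∏ i, Fin.tail v i = v 0 := by
      rw [Fin.prod_univ_succ]
      exact Nat.mul_div_cancel _ (Nat.pos_of_ne_zero (right_ne_zero_of_mul hn))
    simp only [hdiv, Fin.cons_self_tail]
  · rintro ⟨d, w⟩ hw
    simp only [coe_sigma, Set.mem_sigma_iff, mem_coe, Nat.mem_divisors,
      Nat.mem_finMulAntidiag] at hw
    simp [hw]

theorem zeta_pow_apply_eq_dfold {R : Type*} [Semiring R] (k n : ℕ) :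
    ((ζ : ArithmeticFunction R) ^ k) n = dfold k n := by
  rw [dfold_eq_card_finMulAntidiag]
  induction k generalizing n with
  | zero =>
    rcases eq_or_ne n 1 with rfl | hn
    · simp [Nat.finMulAntidiag_one]
    · simp [Nat.finMulAntidiag_zero_left hn, one_apply_ne hn]
  | succ k ih =>
    rw [pow_succ', coe_zeta_mul_apply, card_finMulAntidiag_succ, Nat.cast_sum]
    exact sum_congr rfl fun d _ => ih d

theorem dfold_one_right (k : ℕ) : dfold k 1 = 1 := by
  rw [dfold_eq_card_finMulAntidiag, Nat.finMulAntidiag_one, card_singleton]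

theorem dfold_mul_of_coprime (k : ℕ) {m n : ℕ} (hmn : m.Coprime n) :
    dfold k (m * n) = dfold k m * dfold k n := by
  have hζ : ((ζ : ArithmeticFunction ℕ) ^ k).IsMultiplicative := isMultiplicative_zeta.pow
  have hmul := hζ.map_mul_of_coprime hmn
  rw [← natCoe_nat ζ] at hmul
  simpa only [zeta_pow_apply_eq_dfold, Nat.cast_id] using hmul

theorem zeta_pow_apply_prime_sq (k : ℕ) {p : ℕ} (hp : p.Prime) :
    ((ζ : ArithmeticFunction ℝ) ^ k) (p ^ 2) = (k * (k + 1) / 2 : ℕ) := by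
  rw [Nat.cast_div (Nat.even_mul_succ_self k).two_dvd two_ne_zero]
  have hζ : ((ζ : ArithmeticFunction ℝ)).IsMultiplicative := isMultiplicative_zeta.natCast
  induction k with
  | zero => simp [one_apply_ne, hp.ne_one]
  | succ k ih =>
    rw [pow_succ', coe_zeta_mul_apply, Nat.sum_divisors_prime_pow hp]
    simp only [sum_range_succ, range_zero, sum_empty, pow_zero, pow_one, ih, hζ.pow.map_one,
      pow_apply_prime hζ k hp, natCoe_apply, zeta_apply_ne hp.ne_zero]
    push_cast
    ring

end DivisorFunction

section EulerProduct

theorem sum_range_norm_le_prod_primesBelow {R : Type*} [NormedField R] {a : ArithmeticFunction R}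
    (ha : a.IsMultiplicative) (hlocal : ∀ p : ℕ, p.Prime → Summable fun j : ℕ => ‖a (p ^ j)‖)
    (N : ℕ) : ∑ n ∈ range N, ‖a n‖ ≤ ∏ p ∈ N.primesBelow, ∑' j : ℕ, ‖a (p ^ j)‖ := by
  obtain ⟨-, hprod⟩ := EulerProduct.summable_and_hasSum_smoothNumbers_prod_primesBelow_tsum
    (f := (‖a ·‖)) (by simp [ha.map_one]) (fun h => by simp [ha.map_mul_of_coprime h])
    (fun hp => by simpa using hlocal _ hp) N
  have hind : HasSum (N.smoothNumbers.indicator (‖a ·‖)) _ := hasSum_subtype_iff_indicator.1 hprod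
  calc ∑ n ∈ range N, ‖a n‖
      = ∑ n ∈ range N, N.smoothNumbers.indicator (‖a ·‖) n := sum_congr rfl fun n hn => by
        rcases n.eq_zero_or_pos with rfl | hpos
        · simp [Set.indicator_apply]
        · rw [Set.indicator_of_mem (Nat.mem_smoothNumbers_of_lt hpos (mem_range.1 hn))]
    _ ≤ ∏ p ∈ N.primesBelow, ∑' j : ℕ, ‖a (p ^ j)‖ :=
        sum_le_hasSum _ (fun n _ => Set.indicator_nonneg (fun _ _ => norm_nonneg _) n) hind

theorem summable_norm_of_summable_prime_pow {R : Type*} [NormedField R] {a : ArithmeticFunction R}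
    (ha : a.IsMultiplicative)
    (hsum : Summable fun x : Nat.Primes × ℕ => ‖a ((x.1 : ℕ) ^ (x.2 + 1))‖) :
    Summable (‖a ·‖) := by
  set u : ℕ → ℝ := {p | p.Prime}.indicator fun p => ∑' j : ℕ, ‖a (p ^ (j + 1))‖
  have hu_nonneg (n : ℕ) : 0 ≤ u n :=
    Set.indicator_nonneg (fun _ _ => tsum_nonneg fun _ => norm_nonneg _) n
  have hu : Summable u := summable_subtype_iff_indicator.1 hsum.prod
  have hlocal (p : ℕ) (hp : p.Prime) : Summable fun j => ‖a (p ^ j)‖ :=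
    (summable_nat_add_iff 1).1 (hsum.prod_factor ⟨p, hp⟩)
  have hfactor {p : ℕ} (hp : p.Prime) : ∑' j : ℕ, ‖a (p ^ j)‖ = 1 + u p := by
    have hup : u p = ∑' j : ℕ, ‖a (p ^ (j + 1))‖ := Set.indicator_of_mem hp _
    rw [hup, (hlocal p hp).tsum_eq_zero_add, pow_zero, ha.map_one, norm_one]
  refine summable_of_sum_range_le (c := Real.exp (∑' n, u n)) (fun n => norm_nonneg _) fun N => ?_
  calc ∑ n ∈ range N, ‖a n‖
      ≤ ∏ p ∈ N.primesBelow, ∑' j : ℕ, ‖a (p ^ j)‖ := sum_range_norm_le_prod_primesBelow ha hlocal N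
    _ = ∏ p ∈ N.primesBelow, (1 + u p) :=
        prod_congr rfl fun p hp => hfactor (Nat.prime_of_mem_primesBelow hp)
    _ ≤ Real.exp (∑ p ∈ N.primesBelow, u p) := Real.prod_one_add_le_exp_sum _ hu_nonneg
    _ ≤ Real.exp (∑' n, u n) :=
        Real.exp_le_exp.2 (hu.sum_le_tsum _ fun n _ => hu_nonneg n)

theorem tsum_ne_zero_of_forall_prime {R : Type*} [NormedField R] [CompleteSpace R]
    {a : ArithmeticFunction R}
    (ha : a.IsMultiplicative) (hsum : Summable (‖a ·‖))
    (hlocal : ∀ p : ℕ, p.Prime → ∑' j : ℕ, a (p ^ j) ≠ 0) : ∑' n, a n ≠ 0 := by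
  have hpow : Summable fun x : Nat.Primes × ℕ => ‖a ((x.1 : ℕ) ^ (x.2 + 1))‖ :=
    hsum.comp_injective (Subtype.val_injective.comp Nat.Primes.prodNatEquiv.injective)
  have hfactor (p : Nat.Primes) :
      ∑' j : ℕ, a ((p : ℕ) ^ j) = 1 + ∑' j : ℕ, a ((p : ℕ) ^ (j + 1)) := by
    have := (hsum.comp_injective (Nat.pow_right_injective p.2.two_le)).of_norm
    simpa [ha.map_one] using this.tsum_eq_zero_add
  rw [← ha.eulerProduct_tprod hsum, tprod_congr hfactor]
  refine tprod_one_add_ne_zero_of_summable (fun p => hfactor p ▸ hlocal p p.2) ?_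
  exact hpow.prod.of_nonneg_of_le (fun p => norm_nonneg _) fun p =>
    norm_tsum_le_tsum_norm (hpow.prod_factor p)

theorem summable_nat_add_pow_mul_geometric {x : ℝ} (hx : |x| < 1) (m s : ℕ) :
    Summable fun j : ℕ => ((j : ℝ) + m) ^ s * x ^ j := by
  rcases eq_or_ne x 0 with rfl | hx0
  · refine summable_of_hasFiniteSupport <| (Set.finite_singleton 0).subset fun j hj => ?_
    by_contra hj0
    exact hj (by simp [zero_pow hj0])
  · have hshift := (summable_nat_add_iff m).2
      (summable_pow_mul_geometric_of_norm_lt_one (R := ℝ) s hx)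
    refine (hshift.mul_right (x ^ m)⁻¹).congr fun j => ?_
    push_cast
    rw [pow_add]
    field_simp

theorem summable_norm_of_prime_pow_le {a : ArithmeticFunction ℝ} (ha : a.IsMultiplicative)
    {A B : ℝ} {s : ℕ} (hprime : ∀ p : ℕ, p.Prime → |a p| ≤ B / p ^ 2)
    (hpow : ∀ p : ℕ, p.Prime → ∀ j : ℕ, |a (p ^ j)| ≤ A * (j + 1) ^ s * (p : ℝ)⁻¹ ^ j) :
    Summable (‖a ·‖) := by
  have hA : 0 ≤ A := (abs_nonneg _).trans (by simpa using hpow 2 Nat.prime_two 0)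
  have hB : 0 ≤ B := nonneg_of_mul_nonneg_left
    ((abs_nonneg _).trans (hprime 2 Nat.prime_two)) (by positivity)
  have hbound (p : Nat.Primes) (j : ℕ) : |a ((p : ℕ) ^ (j + 1))| ≤
      ((p : ℝ) ^ 2)⁻¹ * ((B + 2 * A) * ((j + 2 : ℝ) ^ s * 2⁻¹ ^ j)) := by
    have hp : (2 : ℝ) ≤ p := mod_cast p.2.two_le
    rcases j with _ | j
    · have h2s : (1 : ℝ) ≤ 2 ^ s := one_le_pow₀ one_le_two
      calc |a ((p : ℕ) ^ (0 + 1))| ≤ B / p ^ 2 := by simpa using hprime p p.2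
        _ = ((p : ℝ) ^ 2)⁻¹ * (B * 1) := by ring
        _ ≤ ((p : ℝ) ^ 2)⁻¹ * ((B + 2 * A) * 2 ^ s) := by gcongr; linarith
        _ = _ := by simp
    · calc |a ((p : ℕ) ^ (j + 1 + 1))|
          ≤ A * ((j + 1 + 1 : ℕ) + 1) ^ s * (p : ℝ)⁻¹ ^ (j + 1 + 1) := hpow p p.2 _
        _ = ((p : ℝ) ^ 2)⁻¹ * (A * ((j + 3 : ℝ) ^ s * (p : ℝ)⁻¹ ^ j)) := by push_cast; ring
        _ ≤ ((p : ℝ) ^ 2)⁻¹ * ((B / 2 + A) * ((j + 3 : ℝ) ^ s * 2⁻¹ ^ j)) := by gcongr; linarith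
        _ = _ := by push_cast; ring
  have hprimes : Summable fun p : Nat.Primes => ((p : ℝ) ^ 2)⁻¹ :=
    (Real.summable_nat_pow_inv.2 one_lt_two).comp_injective Nat.Primes.coe_nat_injective
  have hgeom := (summable_nat_add_pow_mul_geometric (x := 2⁻¹) (by norm_num [abs_lt]) 2 s).mul_left
    (B + 2 * A)
  refine summable_norm_of_summable_prime_pow ha ?_
  refine (hprimes.mul_of_nonneg hgeom (fun p => by positivity) (fun j => by positivity)
    ).of_nonneg_of_le (fun x => norm_nonneg _) fun x => hbound x.1 x.2

theorem tsum_prime_pow_mul_tsum_prime_pow {R : Type*} [NormedRing R] [CompleteSpace R]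
    {a b : ArithmeticFunction R} {p : ℕ} (hp : p.Prime)
    (ha : Summable fun j : ℕ => ‖a (p ^ j)‖) (hb : Summable fun j : ℕ => ‖b (p ^ j)‖) :
    (∑' j : ℕ, a (p ^ j)) * ∑' j : ℕ, b (p ^ j) = ∑' j : ℕ, (a * b) (p ^ j) := by
  simp only [mul_apply_prime_pow a b hp]
  exact tsum_mul_tsum_eq_tsum_sum_antidiagonal_of_summable_norm ha hb

end EulerProduct

section Summatory

/-- The summatory function `x ↦ ∑_{1 ≤ n ≤ x} a n` of an arithmetic function, at a real
argument. -/
noncomputable def summatory (a : ArithmeticFunction ℝ) (x : ℝ) : ℝ := ∑ n ∈ Ioc 0 ⌊x⌋₊, a n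

theorem summatory_nonneg {a : ArithmeticFunction ℝ} (ha : ∀ n, 0 ≤ a n) (x : ℝ) :
    0 ≤ summatory a x :=
  sum_nonneg fun n _ => ha n

theorem summatory_mono {a : ArithmeticFunction ℝ} (ha : ∀ n, 0 ≤ a n) : Monotone (summatory a) :=
  fun _ _ hxy => sum_le_sum_of_subset_of_nonneg (Ioc_subset_Ioc_right (Nat.floor_mono hxy))
    fun n _ _ => ha n

theorem summatory_mul (a b : ArithmeticFunction ℝ) (x : ℝ) :
    summatory (a * b) x = ∑ n ∈ Ioc 0 ⌊x⌋₊, a n * summatory b (x / n) := by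
  simp only [summatory, Nat.floor_div_natCast, sum_Ioc_mul_eq_sum_sum]

theorem summatory_mul_eq_tsum (a b : ArithmeticFunction ℝ) (x : ℝ) :
    summatory (a * b) x = ∑' n : ℕ, a n * summatory b (x / n) := by
  rw [summatory_mul, tsum_eq_sum]
  intro n hn
  rcases n.eq_zero_or_pos with rfl | hpos
  · simp
  · have hlt : ⌊x⌋₊ < n := by simpa [hpos] using hn
    simp [summatory, Nat.floor_div_natCast, Nat.div_eq_of_lt hlt]

theorem tendsto_log_div_natCast_div_log {n : ℕ} (hn : n ≠ 0) :
    Tendsto (fun z : ℝ => Real.log (z / n) / Real.log z) atTop (𝓝 1) := by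
  have hlim : Tendsto (fun z : ℝ => 1 - Real.log n / Real.log z) atTop (𝓝 1) := by
    simpa using (Real.tendsto_log_atTop.const_div_atTop (Real.log n)).const_sub 1
  refine hlim.congr' ?_
  filter_upwards [eventually_gt_atTop 1] with z hz
  rw [Real.log_div (by positivity) (mod_cast hn), sub_div, div_self (Real.log_pos hz).ne']

theorem tendsto_summatory_div_natCast {a : ArithmeticFunction ℝ} {κ : ℕ} {c : ℝ}
    (ha : Tendsto (fun x => summatory a x / Real.log x ^ κ) atTop (𝓝 c)) {n : ℕ} (hn : n ≠ 0) :
    Tendsto (fun x : ℝ => summatory a (x / n) / Real.log x ^ κ) atTop (𝓝 c) := by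
  have hdiv : Tendsto (fun x : ℝ => x / n) atTop atTop :=
    tendsto_id.atTop_div_const (by positivity)
  have hlim := (ha.comp hdiv).mul ((tendsto_log_div_natCast_div_log hn).pow κ)
  rw [one_pow, mul_one] at hlim
  refine hlim.congr' ?_
  filter_upwards [hdiv.eventually_gt_atTop 1] with x hx
  rw [Function.comp_apply, div_pow, div_mul_div_cancel₀ (pow_pos (Real.log_pos hx) κ).ne']

theorem tendsto_summatory_mul {h a : ArithmeticFunction ℝ} (hh : Summable (‖h ·‖))
    (ha : ∀ n, 0 ≤ a n) {κ : ℕ} {c : ℝ}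
    (hlim : Tendsto (fun x => summatory a x / Real.log x ^ κ) atTop (𝓝 c)) :
    Tendsto (fun x => summatory (h * a) x / Real.log x ^ κ) atTop (𝓝 ((∑' n, h n) * c)) := by
  simp only [summatory_mul_eq_tsum, ← tsum_div_const, mul_div_assoc, ← tsum_mul_right]
  refine tendsto_tsum_of_dominated_convergence (bound := fun n => ‖h n‖ * (c + 1))
    (hh.mul_right _) (fun n => ?_) ?_
  · rcases eq_or_ne n 0 with rfl | hn
    · simp
    · exact (tendsto_summatory_div_natCast hlim hn).const_mul _
  · filter_upwards [hlim.eventually_le_const (lt_add_one c), eventually_ge_atTop 1]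
      with x hx hx1 n
    have hlog : 0 ≤ Real.log x ^ κ := pow_nonneg (Real.log_nonneg hx1) κ
    rcases eq_or_ne n 0 with rfl | hn
    · simp
    have hle : x / n ≤ x := div_le_self (by positivity) (mod_cast Nat.one_le_iff_ne_zero.2 hn)
    rw [norm_mul, Real.norm_of_nonneg (div_nonneg (summatory_nonneg ha _) hlog)]
    gcongr
    exact (div_le_div_of_nonneg_right (summatory_mono ha hle) hlog).trans hx

end Summatory

section HarmonicSums

theorem succ_mul_sub_mul_pow_le_pow_sub_pow {a b : ℝ} (ha : 0 ≤ a) (hab : a ≤ b) (κ : ℕ) :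
    (κ + 1) * ((b - a) * a ^ κ) ≤ b ^ (κ + 1) - a ^ (κ + 1) := by
  have hterm : ∀ i ∈ range (κ + 1), a ^ κ ≤ b ^ i * a ^ (κ + 1 - 1 - i) := fun i hi => by
    calc a ^ κ = a ^ i * a ^ (κ - i) := by
          rw [← pow_add, Nat.add_sub_cancel' (mem_range_succ_iff.1 hi)]
      _ ≤ b ^ i * a ^ (κ - i) := by gcongr
  rw [← geom_sum₂_mul]
  calc (κ + 1) * ((b - a) * a ^ κ) = (#(range (κ + 1)) • a ^ κ) * (b - a) := by
        rw [card_range, nsmul_eq_mul]; push_cast; ring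
    _ ≤ _ := mul_le_mul_of_nonneg_right (card_nsmul_le_sum _ _ _ hterm) (sub_nonneg.2 hab)

theorem pow_sub_pow_le_succ_mul_sub_mul_pow {a b : ℝ} (ha : 0 ≤ a) (hab : a ≤ b) (κ : ℕ) :
    b ^ (κ + 1) - a ^ (κ + 1) ≤ (κ + 1) * ((b - a) * b ^ κ) := by
  have h := (le_abs_self _).trans (abs_pow_sub_pow_le b a (κ + 1))
  rw [abs_of_nonneg (sub_nonneg.2 hab), abs_of_nonneg ha, abs_of_nonneg (ha.trans hab),
    max_eq_left hab, Nat.add_sub_cancel] at h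
  push_cast at h
  linarith

/- The increments of the harmonic numbers are exactly `(i + 1)⁻¹`, so with harmonic numbers in place
of logarithms these sums are Riemann sums of `t ^ κ` over consecutive intervals and can be compared
with the telescoping sum of the differences of `t ^ (κ + 1)`. -/
theorem pow_succ_le_sum_inv_mul_max_sub_harmonic_pow {L : ℝ} (hL : 0 ≤ L) {N : ℕ}
    (hLN : L ≤ harmonic N) (κ : ℕ) :
    L ^ (κ + 1) ≤
      (κ + 1) * ∑ i ∈ range N, ((i : ℝ) + 1)⁻¹ * max 0 (L - harmonic i) ^ κ := by
  set u : ℕ → ℝ := fun i => max 0 (L - harmonic i) with hu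
  have hstep (i : ℕ) : u i ^ (κ + 1) - u (i + 1) ^ (κ + 1) ≤
      (κ + 1) * (((i : ℝ) + 1)⁻¹ * u i ^ κ) := by
    have hsucc : L - harmonic (i + 1) = L - harmonic i - ((i : ℝ) + 1)⁻¹ := by
      rw [harmonic_succ]; push_cast; ring
    have hinv : 0 ≤ ((i : ℝ) + 1)⁻¹ := by positivity
    have hanti : u (i + 1) ≤ u i := max_le_max_left 0 (by linarith)
    have hdiff : u i - u (i + 1) ≤ ((i : ℝ) + 1)⁻¹ := by grind
    refine (pow_sub_pow_le_succ_mul_sub_mul_pow (le_max_left _ _) hanti κ).trans ?_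
    gcongr
  calc L ^ (κ + 1) = u 0 ^ (κ + 1) - u N ^ (κ + 1) := by simp [hu, hL, hLN]
    _ = ∑ i ∈ range N, (u i ^ (κ + 1) - u (i + 1) ^ (κ + 1)) :=
        (sum_range_sub' (fun i => u i ^ (κ + 1)) N).symm
    _ ≤ _ := by
        rw [mul_sum]
        exact sum_le_sum fun i _ => hstep i

theorem sum_inv_mul_sub_harmonic_succ_pow_le {L : ℝ} {N : ℕ} (hLN : harmonic N ≤ L) (κ : ℕ) :
    (κ + 1) * ∑ i ∈ range N, ((i : ℝ) + 1)⁻¹ * (L - harmonic (i + 1)) ^ κ ≤ L ^ (κ + 1) := by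
  set u : ℕ → ℝ := fun i => L - harmonic i with hu
  have hsucc (i : ℕ) : u i - u (i + 1) = ((i : ℝ) + 1)⁻¹ := by
    simp only [hu, harmonic_succ]; push_cast; ring
  have hanti : Antitone u := antitone_nat_of_succ_le fun i => by
    have : 0 ≤ ((i : ℝ) + 1)⁻¹ := by positivity
    linarith [hsucc i]
  have huN : 0 ≤ u N := sub_nonneg.2 hLN
  have hstep : ∀ i ∈ range N, (κ + 1) * (((i : ℝ) + 1)⁻¹ * u (i + 1) ^ κ) ≤
      u i ^ (κ + 1) - u (i + 1) ^ (κ + 1) := fun i hi => by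
    rw [← hsucc]
    exact succ_mul_sub_mul_pow_le_pow_sub_pow (huN.trans (hanti (mem_range.1 hi)))
      (hanti i.le_succ) κ
  calc (κ + 1) * ∑ i ∈ range N, ((i : ℝ) + 1)⁻¹ * u (i + 1) ^ κ
      ≤ ∑ i ∈ range N, (u i ^ (κ + 1) - u (i + 1) ^ (κ + 1)) := by
        rw [mul_sum]
        exact sum_le_sum hstep
    _ = u 0 ^ (κ + 1) - u N ^ (κ + 1) := sum_range_sub' (fun i => u i ^ (κ + 1)) N
    _ ≤ u 0 ^ (κ + 1) := sub_le_self _ (pow_nonneg huN _)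
    _ = L ^ (κ + 1) := by simp [hu]

theorem one_le_div_of_mem_range_floor {x : ℝ} {i : ℕ} (hi : i ∈ range ⌊x⌋₊) :
    1 ≤ x / (i + 1) :=
  (one_le_div (by positivity)).2 (mod_cast (Nat.le_floor_iff' i.succ_ne_zero).1 (mem_range.1 hi))

theorem log_pow_succ_le_sum_inv_mul_log_pow {x : ℝ} (hx : 1 ≤ x) (κ : ℕ) :
    Real.log x ^ (κ + 1) ≤
      (κ + 1) * ∑ i ∈ range ⌊x⌋₊, ((i : ℝ) + 1)⁻¹ * Real.log (x / (i + 1)) ^ κ := by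
  refine (pow_succ_le_sum_inv_mul_max_sub_harmonic_pow (Real.log_nonneg hx)
    (log_le_harmonic_floor x (by positivity)) κ).trans ?_
  gcongr with i hi
  have hlog : Real.log (i + 1) ≤ harmonic i := mod_cast log_add_one_le_harmonic i
  refine max_le (Real.log_nonneg (one_le_div_of_mem_range_floor hi)) ?_
  rw [Real.log_div (by positivity) (by positivity)]
  linarith

theorem sum_inv_mul_add_log_pow_le {c x : ℝ} (hc : 0 ≤ c) (hx : 1 ≤ x) (κ : ℕ) :
    (κ + 1) * ∑ i ∈ range ⌊x⌋₊, ((i : ℝ) + 1)⁻¹ * (c + Real.log (x / (i + 1))) ^ κ ≤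
      (c + 1 + Real.log x) ^ (κ + 1) := by
  refine le_trans ?_ (sum_inv_mul_sub_harmonic_succ_pow_le (L := c + 1 + Real.log x)
    (N := ⌊x⌋₊) (by linarith [harmonic_floor_le_one_add_log x hx]) κ)
  gcongr with i hi
  · exact add_nonneg hc (Real.log_nonneg (one_le_div_of_mem_range_floor hi))
  · have hlog : harmonic (i + 1) ≤ 1 + Real.log (i + 1) := mod_cast harmonic_le_one_add_log (i + 1)
    rw [Real.log_div (by positivity) (by positivity)]
    linarith

end HarmonicSums

section Reciprocal

/-- The arithmetic function `n ↦ 1 / n`. Its `κ`-th power for Dirichlet convolution has Dirichlet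
series `ζ(s + 1) ^ κ`, and is the model to which other arithmetic functions are compared. -/
noncomputable def recip : ArithmeticFunction ℝ := ⟨fun n => (n : ℝ)⁻¹, by simp⟩

/-- The arithmetic function `n ↦ μ n / n`, the inverse of `recip` for Dirichlet convolution. -/
noncomputable def moebiusRecip : ArithmeticFunction ℝ := pmul (μ : ArithmeticFunction ℝ) recip

theorem recip_apply (n : ℕ) : recip n = (n : ℝ)⁻¹ := rfl

theorem recip_apply_mul (m n : ℕ) : recip (m * n) = recip m * recip n := by
  simp [recip_apply, mul_comm]

theorem recip_apply_pow (p j : ℕ) : recip (p ^ j) = (p : ℝ)⁻¹ ^ j := by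
  rw [recip_apply, Nat.cast_pow, inv_pow]

theorem isMultiplicative_recip : recip.IsMultiplicative :=
  ⟨by simp [recip_apply], fun _ => recip_apply_mul _ _⟩

theorem recip_pow_nonneg (κ n : ℕ) : 0 ≤ (recip ^ κ) n := by
  induction κ generalizing n with
  | zero => rw [pow_zero, one_apply]; positivity
  | succ κ ih =>
    rw [pow_succ, mul_apply]
    exact sum_nonneg fun x _ => mul_nonneg (ih _) (by rw [recip_apply]; positivity)

theorem mul_pmul_recip (a b : ArithmeticFunction ℝ) :
    (a * b).pmul recip = a.pmul recip * b.pmul recip := by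
  ext n
  simp only [pmul_apply, mul_apply, sum_mul]
  refine sum_congr rfl fun x hx => ?_
  rw [← (Nat.mem_divisorsAntidiagonal.1 hx).1, recip_apply_mul]
  ring

theorem moebiusRecip_mul_recip : moebiusRecip * recip = 1 := by
  have hrecip : recip = (ζ : ArithmeticFunction ℝ).pmul recip := by simp
  have hone : (1 : ArithmeticFunction ℝ).pmul recip = 1 := by
    ext n
    rcases eq_or_ne n 1 with rfl | hn
    · simp [recip_apply]
    · simp [one_apply_ne hn]
  nth_rw 1 [hrecip, moebiusRecip]
  rw [← mul_pmul_recip, coe_moebius_mul_coe_zeta, hone]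

theorem isMultiplicative_moebiusRecip : moebiusRecip.IsMultiplicative :=
  isMultiplicative_moebius.intCast.pmul isMultiplicative_recip

theorem moebiusRecip_pow_mul_recip_pow (κ : ℕ) : moebiusRecip ^ κ * recip ^ κ = 1 := by
  rw [← mul_pow, moebiusRecip_mul_recip, one_pow]

theorem moebiusRecip_apply_prime {p : ℕ} (hp : p.Prime) : moebiusRecip p = -(p : ℝ)⁻¹ := by
  simp [moebiusRecip, recip_apply, moebius_apply_prime hp]

theorem abs_moebiusRecip_apply_prime_pow_le (p j : ℕ) :
    |moebiusRecip (p ^ j)| ≤ (p : ℝ)⁻¹ ^ j := by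
  have hμ : |((μ (p ^ j) : ℤ) : ℝ)| ≤ 1 := mod_cast abs_moebius_le_one
  rw [moebiusRecip, pmul_apply, intCoe_apply, abs_mul, recip_apply_pow,
    abs_of_nonneg (a := (p : ℝ)⁻¹ ^ j) (by positivity)]
  exact mul_le_of_le_one_left (by positivity) hμ

theorem summatory_recip_mul (a : ArithmeticFunction ℝ) (x : ℝ) :
    summatory (recip * a) x =
      ∑ i ∈ range ⌊x⌋₊, ((i : ℝ) + 1)⁻¹ * summatory a (x / (i + 1)) := by
  have hIco : Ioc 0 ⌊x⌋₊ = Ico (0 + 1) (⌊x⌋₊ + 1) := by grind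
  rw [summatory_mul, hIco, ← sum_Ico_add', ← range_eq_Ico]
  simp [recip_apply]

theorem log_pow_div_factorial_le_summatory_recip_pow (κ : ℕ) {x : ℝ} (hx : 1 ≤ x) :
    Real.log x ^ κ / κ.factorial ≤ summatory (recip ^ κ) x := by
  induction κ generalizing x with
  | zero => simp [summatory, one_apply, hx]
  | succ κ ih =>
    rw [pow_succ' recip, summatory_recip_mul]
    calc Real.log x ^ (κ + 1) / (κ + 1).factorial
        ≤ ((κ + 1) * ∑ i ∈ range ⌊x⌋₊, ((i : ℝ) + 1)⁻¹ * Real.log (x / (i + 1)) ^ κ) /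
            (κ + 1).factorial := by
          gcongr
          exact log_pow_succ_le_sum_inv_mul_log_pow hx κ
      _ = ∑ i ∈ range ⌊x⌋₊,
            ((i : ℝ) + 1)⁻¹ * (Real.log (x / (i + 1)) ^ κ / κ.factorial) := by
          simp only [← mul_div_assoc, ← sum_div, Nat.factorial_succ]
          push_cast
          rw [mul_div_mul_left _ _ (by positivity)]
      _ ≤ _ := by
          gcongr with i hi
          exact ih (one_le_div_of_mem_range_floor hi)

theorem summatory_recip_pow_le (κ : ℕ) {x : ℝ} (hx : 1 ≤ x) :
    summatory (recip ^ κ) x ≤ (κ + Real.log x) ^ κ / κ.factorial := by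
  induction κ generalizing x with
  | zero => simp [summatory, one_apply, hx]
  | succ κ ih =>
    rw [pow_succ' recip, summatory_recip_mul]
    calc _ ≤ ∑ i ∈ range ⌊x⌋₊,
            ((i : ℝ) + 1)⁻¹ * ((κ + Real.log (x / (i + 1))) ^ κ / κ.factorial) := by
          gcongr with i hi
          exact ih (one_le_div_of_mem_range_floor hi)
      _ = ((κ + 1) * ∑ i ∈ range ⌊x⌋₊, ((i : ℝ) + 1)⁻¹ * (κ + Real.log (x / (i + 1))) ^ κ) /
            (κ + 1).factorial := by
          simp only [← mul_div_assoc, ← sum_div, Nat.factorial_succ]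
          push_cast
          rw [mul_div_mul_left _ _ (by positivity)]
      _ ≤ _ := by
          gcongr
          push_cast
          exact sum_inv_mul_add_log_pow_le κ.cast_nonneg hx κ

theorem tendsto_summatory_recip_pow (κ : ℕ) :
    Tendsto (fun x => summatory (recip ^ κ) x / Real.log x ^ κ) atTop
      (𝓝 (κ.factorial : ℝ)⁻¹) := by
  have hupper : Tendsto (fun x => (κ / Real.log x + 1) ^ κ / κ.factorial) atTop
      (𝓝 (κ.factorial : ℝ)⁻¹) := by
    simpa using (((Real.tendsto_log_atTop.const_div_atTop (κ : ℝ)).add_const 1).pow κ).div_const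
      (κ.factorial : ℝ)
  refine tendsto_of_tendsto_of_tendsto_of_le_of_le' tendsto_const_nhds hupper ?_ ?_
  · filter_upwards [eventually_gt_atTop 1] with x hx
    have hlog := Real.log_pos hx
    rw [le_div_iff₀ (by positivity), inv_mul_eq_div]
    exact log_pow_div_factorial_le_summatory_recip_pow κ hx.le
  · filter_upwards [eventually_gt_atTop 1] with x hx
    have hlog := Real.log_pos hx
    rw [div_le_iff₀ (by positivity), div_mul_eq_mul_div, ← mul_pow, add_mul, one_mul,
      div_mul_cancel₀ _ hlog.ne']
    exact summatory_recip_pow_le κ hx.le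

end Reciprocal

section ComparisonWithZeta

theorem mul_moebiusRecip_pow_apply_prime {g : ArithmeticFunction ℝ} (hg : g.IsMultiplicative)
    (κ : ℕ) {p : ℕ} (hp : p.Prime) : (g * moebiusRecip ^ κ) p = g p - κ / p := by
  have hμ := isMultiplicative_moebiusRecip
  rw [mul_apply_prime _ _ hp, pow_apply_prime hμ κ hp, hg.map_one, hμ.pow.map_one,
    moebiusRecip_apply_prime hp]
  ring

variable {g : ArithmeticFunction ℝ} {κ r : ℕ} {A B : ℝ}

theorem summable_norm_mul_moebiusRecip_pow (hg : g.IsMultiplicative)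
    (hprime : ∀ p : ℕ, p.Prime → |g p - κ / p| ≤ B / p ^ 2)
    (hpow : ∀ p : ℕ, p.Prime → ∀ j : ℕ, |g (p ^ j)| ≤ A * (j + 1) ^ r * (p : ℝ)⁻¹ ^ j) :
    Summable (‖(g * moebiusRecip ^ κ) ·‖) := by
  refine summable_norm_of_prime_pow_le (A := A * 1) (B := B) (s := r + κ + 1)
    (hg.mul isMultiplicative_moebiusRecip.pow) (fun p hp => ?_) fun p hp => ?_
  · rw [mul_moebiusRecip_pow_apply_prime hg κ hp]
    exact hprime p hp
  · refine abs_mul_apply_prime_pow_le hp (by positivity) (hpow p hp) fun j => ?_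
    rw [one_mul]
    exact abs_pow_apply_prime_pow_le hp (by positivity)
      (abs_moebiusRecip_apply_prime_pow_le p) κ j

theorem summable_norm_prime_pow_of_abs_le {p : ℕ} (hp : 1 < p)
    (hpow : ∀ j : ℕ, |g (p ^ j)| ≤ A * (j + 1) ^ r * (p : ℝ)⁻¹ ^ j) :
    Summable fun j : ℕ => ‖g (p ^ j)‖ := by
  have hp1 : |(p : ℝ)⁻¹| < 1 := by
    rw [abs_of_nonneg (by positivity)]
    exact inv_lt_one_of_one_lt₀ (mod_cast hp)
  refine ((summable_nat_add_pow_mul_geometric hp1 1 r).mul_left A).of_nonneg_of_le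
    (fun j => norm_nonneg _) fun j => ?_
  simpa [mul_assoc] using hpow j

theorem tsum_prime_pow_mul_moebiusRecip_pow_ne_zero (hg : g.IsMultiplicative)
    (hg_nonneg : ∀ n, 0 ≤ g n) {p : ℕ} (hp : p.Prime)
    (hpow : ∀ j : ℕ, |g (p ^ j)| ≤ A * (j + 1) ^ r * (p : ℝ)⁻¹ ^ j) :
    ∑' j : ℕ, (g * moebiusRecip ^ κ) (p ^ j) ≠ 0 := by
  have hμpow := abs_pow_apply_prime_pow_le hp (by positivity)
    (abs_moebiusRecip_apply_prime_pow_le p) κ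
  have hrpow := abs_pow_apply_prime_pow_le hp (by positivity)
    (fun j => (abs_of_nonneg (by rw [recip_apply_pow]; positivity)).trans_le
      (recip_apply_pow p j).le) κ
  have hgsum := summable_norm_prime_pow_of_abs_le hp.one_lt hpow
  have hμsum := summable_norm_prime_pow_of_abs_le (A := 1) hp.one_lt (by simpa using hμpow)
  have hrsum := summable_norm_prime_pow_of_abs_le (A := 1) hp.one_lt (by simpa using hrpow)
  have hone : ∑' j : ℕ, (1 : ArithmeticFunction ℝ) (p ^ j) = 1 := by
    rw [tsum_eq_single 0 fun j hj => one_apply_ne (by simp [hj, hp.ne_one]), pow_zero, one_one]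
  have hμne : ∑' j : ℕ, (moebiusRecip ^ κ) (p ^ j) ≠ 0 := by
    refine left_ne_zero_of_mul (b := ∑' j : ℕ, (recip ^ κ) (p ^ j)) ?_
    rw [tsum_prime_pow_mul_tsum_prime_pow hp hμsum hrsum, moebiusRecip_pow_mul_recip_pow, hone]
    exact one_ne_zero
  have hgpos : 0 < ∑' j : ℕ, g (p ^ j) :=
    hgsum.of_norm.tsum_pos (fun j => hg_nonneg _) 0 (by simp [hg.map_one])
  rw [← tsum_prime_pow_mul_tsum_prime_pow hp hgsum hμsum]
  exact mul_ne_zero hgpos.ne' hμne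

theorem exists_tendsto_summatory_div_log_pow (hg : g.IsMultiplicative)
    (hg_nonneg : ∀ n, 0 ≤ g n)
    (hprime : ∀ p : ℕ, p.Prime → |g p - κ / p| ≤ B / p ^ 2)
    (hpow : ∀ p : ℕ, p.Prime → ∀ j : ℕ, |g (p ^ j)| ≤ A * (j + 1) ^ r * (p : ℝ)⁻¹ ^ j) :
    ∃ C : ℝ, 0 < C ∧ Tendsto (fun x => summatory g x / Real.log x ^ κ) atTop (𝓝 C) := by
  have hsum := summable_norm_mul_moebiusRecip_pow hg hprime hpow
  have hlim := tendsto_summatory_mul hsum (recip_pow_nonneg κ) (tendsto_summatory_recip_pow κ)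
  rw [mul_assoc, moebiusRecip_pow_mul_recip_pow, mul_one] at hlim
  refine ⟨_, lt_of_le_of_ne' ?_ ?_, hlim⟩
  · refine ge_of_tendsto hlim ?_
    filter_upwards [eventually_ge_atTop 1] with x hx
    exact div_nonneg (summatory_nonneg hg_nonneg x) (pow_nonneg (Real.log_nonneg hx) κ)
  · refine mul_ne_zero (tsum_ne_zero_of_forall_prime (hg.mul isMultiplicative_moebiusRecip.pow)
      hsum fun p hp => ?_) (by positivity)
    exact tsum_prime_pow_mul_moebiusRecip_pow_ne_zero hg hg_nonneg hp (hpow p hp)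

end ComparisonWithZeta

section DivisorSummand

/-- The multiplicative function supported on odd `m` with value
`d_k(m²) / m * ∏_{p ∣ m} p / (p + 1)` there. The product over the primes dividing `2 * m` has the
additional constant factor `2 / 3`, which would destroy multiplicativity. -/
noncomputable def divisorSummand (k : ℕ) : ArithmeticFunction ℝ :=
  ⟨fun m => if Odd m then
    (dfold k (m ^ 2) : ℝ) / m * ∏ p ∈ m.primeFactors, (p : ℝ) / (p + 1) else 0, by simp⟩

theorem divisorSummand_apply (k m : ℕ) : divisorSummand k m = if Odd m then
    (dfold k (m ^ 2) : ℝ) / m * ∏ p ∈ m.primeFactors, (p : ℝ) / (p + 1) else 0 := rfl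

theorem divisorSummand_nonneg (k m : ℕ) : 0 ≤ divisorSummand k m := by
  rw [divisorSummand_apply]
  positivity

theorem isMultiplicative_divisorSummand (k : ℕ) : (divisorSummand k).IsMultiplicative := by
  refine ⟨by simp [divisorSummand_apply, dfold_one_right], fun {m n} hmn => ?_⟩
  · simp only [divisorSummand_apply, Nat.odd_mul]
    by_cases h : Odd m ∧ Odd n
    · have hsq := dfold_mul_of_coprime k (hmn.pow 2 2)
      rw [if_pos h, if_pos h.1, if_pos h.2, mul_pow, hsq, hmn.primeFactors_mul,
        prod_union hmn.disjoint_primeFactors]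
      push_cast
      ring
    · grind

theorem abs_divisorSummand_apply_prime_pow_le (k : ℕ) {p : ℕ} (hp : p.Prime) (j : ℕ) :
    |divisorSummand k (p ^ j)| ≤ 2 ^ k * (j + 1) ^ k * (p : ℝ)⁻¹ ^ j := by
  have hζ : |((ζ : ArithmeticFunction ℝ) ^ k) (p ^ (2 * j))| ≤ (2 * j + 1) ^ k := by
    have := abs_pow_apply_prime_pow_le (a := (ζ : ArithmeticFunction ℝ)) hp zero_le_one
      (fun i => by simp [hp.ne_zero]) k (2 * j)
    simpa using this
  have hprod : ∏ q ∈ (p ^ j).primeFactors, (q : ℝ) / (q + 1) ≤ 1 :=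
    prod_le_one (fun q _ => by positivity) fun q _ =>
      div_le_one_of_le₀ (by linarith) (by positivity)
  rw [abs_of_nonneg (divisorSummand_nonneg k _), divisorSummand_apply]
  split_ifs with hodd
  · rw [zeta_pow_apply_eq_dfold, Nat.abs_cast] at hζ
    calc (dfold k ((p ^ j) ^ 2) : ℝ) / (p ^ j : ℕ) *
          ∏ q ∈ (p ^ j).primeFactors, (q : ℝ) / (q + 1)
        ≤ (2 * j + 1) ^ k / (p ^ j : ℕ) * 1 := by
          rw [← pow_mul, mul_comm j]
          gcongr
      _ ≤ (2 * (j + 1)) ^ k / (p ^ j : ℕ) * 1 := by gcongr; linarith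
      _ = 2 ^ k * (j + 1) ^ k * (p : ℝ)⁻¹ ^ j := by
          push_cast
          rw [mul_pow, mul_one, inv_pow, div_eq_mul_inv]
  · positivity

theorem abs_divisorSummand_apply_prime_sub_le (k : ℕ) {p : ℕ} (hp : p.Prime) :
    |divisorSummand k p - (k * (k + 1) / 2 : ℕ) / p| ≤ 2 * (k * (k + 1) / 2 : ℕ) / p ^ 2 := by
  have hp0 : (0 : ℝ) < p := mod_cast hp.pos
  rw [divisorSummand_apply]
  split_ifs with hodd
  · rw [← zeta_pow_apply_eq_dfold, zeta_pow_apply_prime_sq k hp,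
      hp.primeFactors, prod_singleton]
    have hκ : (0 : ℝ) ≤ (k * (k + 1) / 2 : ℕ) := Nat.cast_nonneg _
    generalize ((k * (k + 1) / 2 : ℕ) : ℝ) = κ at hκ ⊢
    have hdiff : κ / p * (p / (p + 1)) - κ / p = -(κ / (p * (p + 1))) := by
      field_simp
      ring
    rw [hdiff, abs_neg, abs_of_nonneg (by positivity)]
    gcongr <;> nlinarith
  · obtain rfl : p = 2 := hp.even_iff.1 (Nat.not_odd_iff_even.1 hodd)
    rw [zero_sub, abs_neg, abs_of_nonneg (by positivity)]
    exact le_of_eq (by push_cast; ring)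

theorem ite_odd_eq_two_thirds_mul_divisorSummand (k m : ℕ) :
    (if Odd m then
      (dfold k (m ^ 2) : ℝ) / m * ∏ p ∈ (2 * m).primeFactors, (p : ℝ) / (p + 1)
    else 0) = 2 / 3 * divisorSummand k m := by
  rw [divisorSummand_apply]
  split_ifs with hodd
  · have h2 : Nat.Coprime 2 m := Nat.coprime_two_left.2 hodd
    rw [h2.primeFactors_mul, prod_union h2.disjoint_primeFactors, Nat.prime_two.primeFactors,
      prod_singleton]
    push_cast
    ring
  · simp

end DivisorSummand

end

/-- Selberg–Delange type asymptotic: since the Dirichlet series of the non-negative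
multiplicative summand equals `ζ(s)^{k(k+1)/2}` times a series absolutely convergent
in a half-plane `Re s > 1 - δ` with positive value at `s = 1`, one has
`∑_{m ≤ z, m odd} (d_k(m²)/m) ∏_{p ∣ 2m} p/(p+1) ∼ C(k) (log z)^{k(k+1)/2}`
for a positive constant `C(k)`. -/
theorem selberg_delange_dk_sum (k : ℕ) (hk : 1 ≤ k) :
    ∃ C : ℝ, 0 < C ∧
      Tendsto (fun z : ℝ =>
          (∑ m ∈ Finset.Icc 1 ⌊z⌋₊,
              if Odd m then
                (dfold k (m ^ 2) : ℝ) / m * ∏ p ∈ (2 * m).primeFactors, (p : ℝ) / (p + 1)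
              else 0) /
            Real.log z ^ (k * (k + 1) / 2)) atTop (nhds C) := by
  obtain ⟨C, hC, hlim⟩ := exists_tendsto_summatory_div_log_pow (isMultiplicative_divisorSummand k)
    (divisorSummand_nonneg k) (fun p hp => abs_divisorSummand_apply_prime_sub_le k hp)
    (fun p hp => abs_divisorSummand_apply_prime_pow_le k hp)
  refine ⟨2 / 3 * C, by positivity, (hlim.const_mul (2 / 3)).congr fun z => ?_⟩
  rw [← mul_div_assoc, summatory, Finset.mul_sum]
  congr 1
  exact (Finset.sum_congr rfl fun m _ => ite_odd_eq_two_thirds_mul_divisorSummand k m).symm
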